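/- arXiv:2208.00794 — 2 statements merged into one kernel-verified Lean document; each statement's English description precedes it below -/
import Mathlib

section
/- Let r ≥ 2 be an integer. If α ∈ [0,1] is a non-jump for r, then for each integer m ≥ 2 the number 1 − (1 − α)/m^{r−1} is also a non-jump for r. -/
/-!
The contrapositive is proved directly on graphs: if `β = 1 - (1 - α) / m ^ (r - 1)` is a jump
with constant `c`, then `α` is a jump with a smaller constant `c'`.

Let `G` be an `r`-graph on `n` vertices with density at least `α + ε`. Take `m` disjoint copies
of `G` and add every `r`-set meeting at least two copies (`blockGraph`). The missing `r`-sets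
have density at most `(1 - α - ε) / m ^ (r - 1)`, because `m ^ r C(n, r) ≤ C(m n, r)`
(`pow_mul_choose_le`), so this graph has density at least `β + ε / m ^ (r - 1)` and contains
`M` vertices `W` spanning density at least `β + c`, for an `M` chosen in advance.

Suppose that every `k`-set of `G` had density below `α + c'`. By averaging
(`card_edges_le_of_local`) every larger set has density at most `α + c'`, so each block that meets
`W` in `w i ≥ k` points misses at least `(1 - α - c') C(w i, r)` of its `r`-sets. By convexity
`∑ i, C(w i, r)` is at least `(1 / m ^ (r - 1) - o(1)) C(M, r)` (`exists_large_split`), and the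
blocks with `w i < k` are negligible for large `M`. Hence `W` spans density at most
`β + c' / m ^ (r - 1) + o(1) < β + c`, a contradiction. The case `α = 1` is excluded since `1` is
a jump.
-/

open Filter Topology

noncomputable section

/-- The Lagrange polynomial `λ_𝓔` of a family `E` of `r`-multisets on the index type `ι`:
`λ_𝓔(x) = r! · ∑_{E ∈ 𝓔} ∏_i x_i^{E(i)} / E(i)!`. -/
def lagrangePoly {ι : Type} [Fintype ι] [DecidableEq ι]
    (r : ℕ) (E : Finset (Multiset ι)) (x : ι → ℝ) : ℝ :=
  (Nat.factorial r : ℝ) *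
    ∑ e ∈ E, ∏ i, x i ^ (Multiset.count i e) / ((Multiset.count i e).factorial : ℝ)

/-- The Lagrangian `λ(P)` of a pattern `P = (ι, E)`: the maximum of the Lagrange polynomial
over the standard simplex. -/
def patternLagrangian {ι : Type} [Fintype ι] [DecidableEq ι]
    (r : ℕ) (E : Finset (Multiset ι)) : ℝ :=
  sSup (lagrangePoly r E '' stdSimplex ℝ ι)

/-- The family `𝓔[S]` of the induced subpattern `P[S]`, consisting of those multisets of `E`
all of whose elements lie in `S`, relabelled as multisets on the subtype `{i // i ∈ S}`. -/
def subFamily {ι : Type} [DecidableEq ι] (E : Finset (Multiset ι)) (S : Finset ι) :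
    Finset (Multiset {i : ι // i ∈ S}) := by
  classical
  exact (E.filter (fun e => ∀ i ∈ e, i ∈ S)).image
    (fun e => Multiset.filterMap
      (fun i => if h : i ∈ S then some (⟨i, h⟩ : {i : ι // i ∈ S}) else none) e)

/-- A pattern is minimal if removing any index strictly decreases the Lagrangian.
(`P - i` is exactly the induced subpattern on `univ.erase i`.) -/
def IsMinimalPattern {ι : Type} [Fintype ι] [DecidableEq ι] (r : ℕ)
    (E : Finset (Multiset ι)) : Prop :=
  ∀ i : ι, patternLagrangian r (subFamily E (Finset.univ.erase i)) < patternLagrangian r E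

/-- Index set of the union `P₁ ⊕_i P₂`: index `i` of `ι₁` is replaced by a copy of `ι₂`. -/
abbrev unionIndex (ι₁ ι₂ : Type) (i : ι₁) : Type := {j : ι₁ // j ≠ i} ⊕ ι₂

/-- Projection of the union index set back to `ι₁` (collapsing the copy of `ι₂` to `i`). -/
def unionProj {ι₁ ι₂ : Type} (i : ι₁) : unionIndex ι₁ ι₂ i → ι₁ :=
  Sum.elim (fun j => j.1) (fun _ => i)

/-- The family `𝓔̂` of the union `P₁ ⊕_i P₂`: an `r`-multiset on the new index set belongs to
`𝓔̂` iff its projection to `ι₁` belongs to `E₁` (cases (b),(c)), or it is a copy of a member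
of `E₂` lying inside the copy of `ι₂` (case (a)). -/
def unionFamily {ι₁ ι₂ : Type} [Fintype ι₁] [Fintype ι₂] [DecidableEq ι₁] [DecidableEq ι₂]
    (r : ℕ) (E₁ : Finset (Multiset ι₁)) (E₂ : Finset (Multiset ι₂)) (i : ι₁) :
    Finset (Multiset (unionIndex ι₁ ι₂ i)) := by
  classical
  exact Finset.image (fun R : Sym (unionIndex ι₁ ι₂ i) r => (R : Multiset (unionIndex ι₁ ι₂ i)))
    ((Finset.univ.sym r).filter
      (fun R : Sym (unionIndex ι₁ ι₂ i) r =>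
        Multiset.map (unionProj i) (R : Multiset (unionIndex ι₁ ι₂ i)) ∈ E₁ ∨
        ∃ e ∈ E₂, (R : Multiset (unionIndex ι₁ ι₂ i)) = Multiset.map Sum.inr e))

/-- Index set of the union `P₁ ⊕_T P₂`: each index of `T` is replaced by a copy of `ι₂`. -/
abbrev unionIndexT (ι₁ ι₂ : Type) (T : Finset ι₁) : Type :=
  {j : ι₁ // j ∉ T} ⊕ ({j : ι₁ // j ∈ T} × ι₂)

/-- Projection of the union index set back to `ι₁`. -/
def unionProjT {ι₁ ι₂ : Type} (T : Finset ι₁) : unionIndexT ι₁ ι₂ T → ι₁ :=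
  Sum.elim (fun j => j.1) (fun p => p.1.1)

/-- The family `𝓔̂` of the union `P₁ ⊕_T P₂`. -/
def unionFamilyT {ι₁ ι₂ : Type} [Fintype ι₁] [Fintype ι₂] [DecidableEq ι₁] [DecidableEq ι₂]
    (r : ℕ) (E₁ : Finset (Multiset ι₁)) (E₂ : Finset (Multiset ι₂)) (T : Finset ι₁) :
    Finset (Multiset (unionIndexT ι₁ ι₂ T)) := by
  classical
  exact Finset.image (fun R : Sym (unionIndexT ι₁ ι₂ T) r => (R : Multiset (unionIndexT ι₁ ι₂ T)))
    ((Finset.univ.sym r).filter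
      (fun R : Sym (unionIndexT ι₁ ι₂ T) r =>
        Multiset.map (unionProjT T) (R : Multiset (unionIndexT ι₁ ι₂ T)) ∈ E₁ ∨
        ∃ i : {j : ι₁ // j ∈ T}, ∃ e ∈ E₂,
          (R : Multiset (unionIndexT ι₁ ι₂ T)) = Multiset.map (fun k => Sum.inr (i, k)) e))

/-- The pattern `P_G` associated with an `r`-graph `G`: its multisets are the edges of `G`. -/
def graphPattern {V : Type} [DecidableEq V] (G : Finset (Finset V)) : Finset (Multiset V) :=
  G.image Finset.val

/-- The Lagrangian `λ(G)` of an `r`-graph `G`. -/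
def graphLagrangian {V : Type} [Fintype V] [DecidableEq V] (r : ℕ) (G : Finset (Finset V)) : ℝ :=
  patternLagrangian r (graphPattern G)

/-- `α` is a jump for `r`. -/
def IsJump (r : ℕ) (α : ℝ) : Prop :=
  ∃ c : ℝ, 0 < c ∧ ∀ ε : ℝ, 0 < ε → ∀ m : ℕ, r ≤ m → ∃ n₀ : ℕ, ∀ n : ℕ, n₀ ≤ n →
    ∀ G : Finset (Finset (Fin n)), (∀ e ∈ G, e.card = r) →
      α + ε ≤ (G.card : ℝ) / (n.choose r : ℝ) →
      ∃ W : Finset (Fin n), W.card = m ∧ ∃ H ⊆ G, (∀ e ∈ H, e ⊆ W) ∧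
        α + c ≤ (H.card : ℝ) / (m.choose r : ℝ)

/-- `G` contains a copy of `F` as a subgraph. -/
def GraphContains {n k : ℕ} (G : Finset (Finset (Fin n))) (F : Finset (Finset (Fin k))) : Prop :=
  ∃ φ : Fin k → Fin n, Function.Injective φ ∧ ∀ e ∈ F, e.image φ ∈ G

/-- The Turán number `ex(n, 𝓕)` for a family `𝓕` of graphs, among `r`-uniform hosts. -/
def exNum (r n : ℕ) (𝓕 : Set (Σ k : ℕ, Finset (Finset (Fin k)))) : ℕ :=
  sSup {c : ℕ | ∃ G : Finset (Finset (Fin n)), (∀ e ∈ G, e.card = r) ∧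
    (∀ F ∈ 𝓕, ¬ GraphContains G F.2) ∧ G.card = c}

/-- `Π_∞^{(r)}`: the set of Turán densities of (possibly infinite) families of `r`-graphs. -/
def turanDensitySet (r : ℕ) : Set ℝ :=
  {x | ∃ 𝓕 : Set (Σ k : ℕ, Finset (Finset (Fin k))),
    (∀ F ∈ 𝓕, ∀ e ∈ F.2, e.card = r) ∧
    Tendsto (fun n => (exNum r n 𝓕 : ℝ) / (n.choose r : ℝ)) atTop (nhds x)}

/-- `Λ^{(r)}`: the set of Lagrangians of `r`-graphs. -/
def lambdaSet (r : ℕ) : Set ℝ :=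
  {x | ∃ (n : ℕ) (G : Finset (Finset (Fin n))), (∀ e ∈ G, e.card = r) ∧ graphLagrangian r G = x}

/-- The tail `(P_t)_{t ≥ t₀}` of a sequence of patterns is a `(k, l)`-sequence. -/
def IsKLambdaSeqFrom (r k t₀ : ℕ) (l : ℝ) (ι : ℕ → Type)
    [∀ t, Fintype (ι t)] [∀ t, DecidableEq (ι t)]
    (𝓔 : ∀ t, Finset (Multiset (ι t))) : Prop :=
  ∃ ε : ℕ → ℝ,
    (∀ t, t₀ ≤ t → 0 < ε t) ∧
    Tendsto (fun t => patternLagrangian r (𝓔 t)) atTop (nhds l) ∧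
    (∀ t, t₀ ≤ t → l + ε t ≤ patternLagrangian r (𝓔 t)) ∧
    (∀ t, t₀ ≤ t → ∀ S : Finset (ι t), S.card = k →
      patternLagrangian r (subFamily (𝓔 t) S) ≤ l)

/-- A `(k, l)`-sequence of patterns. -/
def IsKLambdaSeq (r k : ℕ) (l : ℝ) (ι : ℕ → Type)
    [∀ t, Fintype (ι t)] [∀ t, DecidableEq (ι t)]
    (𝓔 : ∀ t, Finset (Multiset (ι t))) : Prop :=
  IsKLambdaSeqFrom r k 0 l ι 𝓔

/-- A non-jump sequence of patterns on `l`: for every `k > 0` some tail is a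
`(k, l)`-sequence. -/
def IsNonJumpSeq (r : ℕ) (l : ℝ) (ι : ℕ → Type)
    [∀ t, Fintype (ι t)] [∀ t, DecidableEq (ι t)]
    (𝓔 : ∀ t, Finset (Multiset (ι t))) : Prop :=
  ∀ k : ℕ, 0 < k → ∃ t₀ : ℕ, IsKLambdaSeqFrom r k t₀ l ι 𝓔

/-- The family of all `r`-multisets on `Fin m` except the `m` constant ones. -/
def allButConstant (m r : ℕ) : Finset (Multiset (Fin m)) := by
  classical
  exact ((Finset.univ.sym r).image (fun s : Sym (Fin m) r => (s : Multiset (Fin m)))).filter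
    (fun e => ¬ ∃ i : Fin m, e = Multiset.replicate r i)

end

/-! ### Averaging and binomial estimates -/

/-- Averaging over the `k`-subsets of `S`: an upper bound on the edge density of all `k`-sets
passes to every larger set. -/
lemma card_edges_le_of_local {V : Type*} [DecidableEq V] {G : Finset (Finset V)} {r k : ℕ}
    {x : ℝ} (hG : ∀ e ∈ G, e.card = r) (hrk : r ≤ k)
    (hloc : ∀ W : Finset V, W.card = k →
      ((G.filter (· ⊆ W)).card : ℝ) ≤ x * (k.choose r : ℝ))
    (S : Finset V) (hS : k ≤ S.card) :
    ((G.filter (· ⊆ S)).card : ℝ) ≤ x * (S.card.choose r : ℝ) := by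
  have hcount : ∑ W ∈ S.powersetCard k, (G.filter (· ⊆ W)).card
      = (G.filter (· ⊆ S)).card * (S.card - r).choose (k - r) := by
    have h1 := Finset.sum_card_bipartiteAbove_eq_sum_card_bipartiteBelow
      (s := S.powersetCard k) (t := G.filter (· ⊆ S)) (fun W e : Finset V => e ⊆ W)
    calc ∑ W ∈ S.powersetCard k, (G.filter (· ⊆ W)).card
        = ∑ W ∈ S.powersetCard k,
            ((G.filter (· ⊆ S)).bipartiteAbove (fun W e : Finset V => e ⊆ W) W).card := by
          refine Finset.sum_congr rfl fun W hW => ?_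
          congr 1
          ext e
          simp only [Finset.bipartiteAbove, Finset.mem_filter]
          have := (Finset.mem_powersetCard.mp hW).1
          exact ⟨fun h => ⟨⟨h.1, h.2.trans this⟩, h.2⟩, fun h => ⟨h.1.1, h.2⟩⟩
      _ = _ := h1
      _ = ∑ e ∈ G.filter (· ⊆ S), (S.card - r).choose (k - r) := by
          refine Finset.sum_congr rfl fun e he => ?_
          obtain ⟨heG, heS⟩ := Finset.mem_filter.mp he
          have hc := hG e heG
          have := Finset.card_filter_powersetCard_subset e S k heS (by omega)
          rw [hc] at this
          exact this
      _ = _ := by simp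
  have hle : (((G.filter (· ⊆ S)).card * (S.card - r).choose (k - r) : ℕ) : ℝ)
      ≤ (S.card.choose k : ℝ) * (x * (k.choose r : ℝ)) := by
    rw [← hcount, Nat.cast_sum]
    calc _ ≤ ∑ W ∈ S.powersetCard k, x * (k.choose r : ℝ) :=
          Finset.sum_le_sum fun W hW => hloc W (Finset.mem_powersetCard.mp hW).2
      _ = _ := by simp
  have hmul : (S.card.choose k : ℝ) * (k.choose r : ℝ)
      = (S.card.choose r : ℝ) * ((S.card - r).choose (k - r) : ℝ) := by
    exact_mod_cast Nat.choose_mul hrk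
  have hpos : (0 : ℝ) < ((S.card - r).choose (k - r) : ℝ) := by
    exact_mod_cast Nat.choose_pos (by omega)
  refine le_of_mul_le_mul_right ?_ hpos
  push_cast at hle
  calc _ ≤ _ := hle
    _ = x * ((S.card.choose k : ℝ) * (k.choose r : ℝ)) := by ring
    _ = _ := by rw [hmul]; ring

/-- Each factor `(n - i) / (m n - i)` of `C(n, r) / C(m n, r)` is at most `1 / m`. -/
lemma pow_mul_choose_le (m n r : ℕ) (hm : 1 ≤ m) :
    m ^ r * n.choose r ≤ (m * n).choose r := by
  have key : ∀ s, m ^ s * n.descFactorial s ≤ (m * n).descFactorial s := by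
    intro s
    induction s with
    | zero => simp
    | succ s ih =>
      rw [Nat.descFactorial_succ, Nat.descFactorial_succ]
      have h1 : m * (n - s) ≤ m * n - s := by
        rw [Nat.mul_sub]
        have : s ≤ m * s := Nat.le_mul_of_pos_left s hm
        omega
      calc m ^ (s + 1) * ((n - s) * n.descFactorial s)
          = (m * (n - s)) * (m ^ s * n.descFactorial s) := by ring
        _ ≤ _ := Nat.mul_le_mul h1 ih
  have h := key r
  rw [Nat.descFactorial_eq_factorial_mul_choose, Nat.descFactorial_eq_factorial_mul_choose] at h
  refine Nat.le_of_mul_le_mul_left ?_ (Nat.factorial_pos r)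
  calc _ = m ^ r * (r.factorial * n.choose r) := by ring
    _ ≤ _ := h

/-- Jensen's inequality for `w ↦ C(w, r)`, with `C(w, r)` bounded below by `(w - r)₊ ^ r / r!`. -/
lemma pow_div_le_sum_choose (m r M : ℕ) (hr : 1 ≤ r) (hM : m * r ≤ M)
    (w : Fin m → ℕ) (hw : ∑ i, w i = M) :
    ((M : ℝ) - m * r) ^ r / (r.factorial * (m : ℝ) ^ (r - 1)) ≤ ∑ i, ((w i).choose r : ℝ) := by
  obtain ⟨s, rfl⟩ : ∃ s, r = s + 1 := ⟨r - 1, by omega⟩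
  have hM' : (0 : ℝ) ≤ (M : ℝ) - m * (s + 1 : ℕ) := by
    have : ((m * (s + 1) : ℕ) : ℝ) ≤ M := by exact_mod_cast hM
    push_cast at this ⊢
    linarith
  have h1 : (M : ℝ) - m * (s + 1 : ℕ) ≤ ∑ i, ((w i - (s + 1) : ℕ) : ℝ) := by
    have h2 : ∑ i, ((w i : ℝ) - (s + 1 : ℕ)) ≤ ∑ i, ((w i - (s + 1) : ℕ) : ℝ) := by
      refine Finset.sum_le_sum fun i _ => ?_
      have : w i ≤ (w i - (s + 1)) + (s + 1) := by omega
      have : (w i : ℝ) ≤ ((w i - (s + 1) : ℕ) : ℝ) + ((s + 1 : ℕ) : ℝ) := by exact_mod_cast this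
      linarith
    refine le_trans (le_of_eq ?_) h2
    rw [Finset.sum_sub_distrib, ← hw]
    simp only [Nat.cast_sum, Finset.sum_const, Finset.card_univ, Fintype.card_fin, nsmul_eq_mul]
  have h3 := pow_sum_div_card_le_sum_pow (s := (Finset.univ : Finset (Fin m)))
    (f := fun i => ((w i - (s + 1) : ℕ) : ℝ)) (fun i _ => Nat.cast_nonneg _) s
  rw [Finset.card_univ, Fintype.card_fin] at h3
  have hfac : (0 : ℝ) < ((s + 1).factorial : ℝ) := by exact_mod_cast Nat.factorial_pos _
  have h4 : ∑ i, ((w i - (s + 1) : ℕ) : ℝ) ^ (s + 1) / ((s + 1).factorial : ℝ)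
      ≤ ∑ i, ((w i).choose (s + 1) : ℝ) := by
    refine Finset.sum_le_sum fun i _ => ?_
    refine le_trans ?_ (Nat.pow_le_choose (α := ℝ) (s + 1) (w i))
    gcongr
    omega
  refine le_trans ?_ h4
  rw [← Finset.sum_div, mul_comm (((s + 1).factorial : ℝ)), ← div_div, Nat.add_sub_cancel]
  refine div_le_div_of_nonneg_right (le_trans ?_ h3) hfac.le
  gcongr

/-- For some `M ≥ N`, splitting an `M`-set in any way into `m` parts leaves at least a fraction
`1 / m ^ (r - 1) - δ` of its `r`-sets, plus `K` more, inside the parts. -/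
lemma exists_large_split (m r N : ℕ) (hm : 1 ≤ m) (hr : 1 ≤ r) (K δ : ℝ) (hK : 0 ≤ K)
    (hδ : 0 < δ) (hδ' : δ ≤ 1 / (m : ℝ) ^ (r - 1)) :
    ∃ M : ℕ, N ≤ M ∧ ∀ w : Fin m → ℕ, ∑ i, w i = M →
      (1 / (m : ℝ) ^ (r - 1) - δ) * (M.choose r : ℝ) ≤ ∑ i, ((w i).choose r : ℝ) - K := by
  -- This threshold dominates the Bernoulli error `m r ^ 2 / M` and the additive term `K`.
  obtain ⟨M₁, hM₁⟩ := exists_nat_ge (((m : ℝ) * r ^ 2 + K * r.factorial) / δ)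
  refine ⟨max (max N (m * r)) (max M₁ 1), by omega, fun w hw => ?_⟩
  set M := max (max N (m * r)) (max M₁ 1) with hMdef
  have hMr : m * r ≤ M := by omega
  have hM1 : 1 ≤ M := by omega
  have hMM₁ : M₁ ≤ M := by omega
  clear_value M
  have hMbig : (m : ℝ) * r ^ 2 + K * r.factorial ≤ M * δ := by
    have : (M₁ : ℝ) ≤ M := by exact_mod_cast hMM₁
    rw [div_le_iff₀ hδ] at hM₁
    nlinarith
  have hsum := pow_div_le_sum_choose m r M hr hMr w hw
  have hch : (M.choose r : ℝ) ≤ (M : ℝ) ^ r / (r.factorial : ℝ) := Nat.choose_le_pow_div r M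
  obtain ⟨s, rfl⟩ : ∃ s, r = s + 1 := ⟨r - 1, by omega⟩
  rw [Nat.add_sub_cancel] at *
  have hm1 : (1 : ℝ) ≤ m := by exact_mod_cast hm
  have hq : (1 : ℝ) ≤ (m : ℝ) ^ s := one_le_pow₀ hm1
  have hM1' : (1 : ℝ) ≤ M := by exact_mod_cast hM1
  have hMs : (1 : ℝ) ≤ (M : ℝ) ^ s := one_le_pow₀ hM1'
  have hfac : (0 : ℝ) < ((s + 1).factorial : ℝ) := by exact_mod_cast Nat.factorial_pos _
  set F : ℝ := ((s + 1).factorial : ℝ) with hF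
  set q : ℝ := (m : ℝ) ^ s with hqdef
  set R : ℝ := ((s + 1 : ℕ) : ℝ) with hR
  have hMr' : (m : ℝ) * R ≤ M := by rw [hR]; exact_mod_cast hMr
  have hR0 : 0 ≤ R := Nat.cast_nonneg _
  have hbern : (M : ℝ) ^ (s + 1) - m * R ^ 2 * (M : ℝ) ^ s ≤ ((M : ℝ) - m * R) ^ (s + 1) := by
    have hM0 : (0 : ℝ) < M := by linarith
    have hb := one_add_mul_le_pow (a := -((m : ℝ) * R / M))
      (by
        have : (m : ℝ) * R / M ≤ 1 := (div_le_one hM0).mpr hMr'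
        linarith) (s + 1)
    have hb' := mul_le_mul_of_nonneg_left hb (pow_nonneg hM0.le (s + 1))
    rw [← mul_pow] at hb'
    calc _ = (M : ℝ) ^ (s + 1) * (1 + R * -((m : ℝ) * R / M)) := by
          field_simp
          ring
      _ ≤ _ := hb'
      _ = _ := by congr 1; field_simp; ring
  have h1 : (1 / q - δ) * (M.choose (s + 1) : ℝ) ≤ (1 / q - δ) * ((M : ℝ) ^ (s + 1) / F) :=
    mul_le_mul_of_nonneg_left hch (by linarith)
  have h2 : ((M : ℝ) ^ (s + 1) - m * R ^ 2 * (M : ℝ) ^ s) / (F * q)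
      ≤ ∑ i, ((w i).choose (s + 1) : ℝ) :=
    le_trans (by gcongr) hsum
  have h3 : (m : ℝ) * R ^ 2 * (M : ℝ) ^ s / q + K * F ≤ δ * (M : ℝ) ^ (s + 1) := by
    have ha : (m : ℝ) * R ^ 2 * (M : ℝ) ^ s / q ≤ (m : ℝ) * R ^ 2 * (M : ℝ) ^ s :=
      div_le_self (by positivity) hq
    have hb : K * F ≤ K * F * (M : ℝ) ^ s := le_mul_of_one_le_right (by positivity) hMs
    calc _ ≤ ((m : ℝ) * R ^ 2 + K * F) * (M : ℝ) ^ s := by linarith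
      _ ≤ (M * δ) * (M : ℝ) ^ s := by gcongr
      _ = _ := by ring
  have h4 : (1 / q - δ) * ((M : ℝ) ^ (s + 1) / F)
      ≤ ((M : ℝ) ^ (s + 1) - m * R ^ 2 * (M : ℝ) ^ s) / (F * q) - K := by
    have hq0 : 0 < q := by linarith
    have e1 : (1 / q - δ) * ((M : ℝ) ^ (s + 1) / F)
        = ((M : ℝ) ^ (s + 1) / q - δ * (M : ℝ) ^ (s + 1)) / F := by ring
    have e2 : ((M : ℝ) ^ (s + 1) - m * R ^ 2 * (M : ℝ) ^ s) / (F * q) - K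
        = ((M : ℝ) ^ (s + 1) / q - m * R ^ 2 * (M : ℝ) ^ s / q - K * F) / F := by
      field_simp
    rw [e1, e2]
    exact div_le_div_of_nonneg_right (by linarith) hfac.le
  linarith

/-! ### The block construction -/

/-- The embedding of `Fin n` onto the `i`-th of `m` blocks of `Fin (m * n)`. -/
def blockEmb (m n : ℕ) (i : Fin m) : Fin n ↪ Fin (m * n) :=
  ⟨fun x => finProdFinEquiv (i, x), fun x y h => by simpa using h⟩

/-- The copies, in each of the `m` blocks of `Fin (m * n)`, of the `r`-sets that are not
edges of `G`. -/
def blockNonEdges (m n r : ℕ) (G : Finset (Finset (Fin n))) : Finset (Finset (Fin (m * n))) :=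
  Finset.univ.biUnion fun i : Fin m =>
    (Finset.univ.powersetCard r \ G).map (Finset.mapEmbedding (blockEmb m n i)).toEmbedding

/-- The `r`-graph on `m` blocks of size `n` consisting of a copy of `G` inside each block and
of all `r`-sets that meet at least two blocks. -/
def blockGraph (m n r : ℕ) (G : Finset (Finset (Fin n))) : Finset (Finset (Fin (m * n))) :=
  Finset.univ.powersetCard r \ blockNonEdges m n r G

lemma sum_card_block {m n : ℕ} (W : Finset (Fin (m * n))) :
    ∑ i, (Finset.univ.filter fun x => blockEmb m n i x ∈ W).card = W.card := by
  have h : W.card = (Finset.univ.filter fun p : Fin m × Fin n => finProdFinEquiv p ∈ W).card := by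
    refine (Finset.card_bij (fun p _ => finProdFinEquiv p) ?_ ?_ ?_).symm
    · intro p hp
      exact (Finset.mem_filter.mp hp).2
    · intro p _ p' _ hpp
      exact finProdFinEquiv.injective hpp
    · intro y hy
      exact ⟨finProdFinEquiv.symm y,
        Finset.mem_filter.mpr ⟨Finset.mem_univ _, by rwa [Equiv.apply_symm_apply]⟩,
        Equiv.apply_symm_apply _ _⟩
  rw [h, Finset.card_filter, Fintype.sum_prod_type]
  refine Finset.sum_congr rfl fun i _ => ?_
  rw [Finset.card_filter]
  rfl

lemma card_blockGraph_ge (m n r : ℕ) (G : Finset (Finset (Fin n)))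
    (hG : ∀ e ∈ G, e.card = r) :
    ((m * n).choose r : ℝ) - m * ((n.choose r : ℝ) - G.card) ≤ (blockGraph m n r G).card := by
  have hsub : G ⊆ Finset.univ.powersetCard r := fun e he =>
    Finset.mem_powersetCard.mpr ⟨Finset.subset_univ _, hG e he⟩
  have h1 : (Finset.univ.powersetCard r \ G).card + G.card = n.choose r := by
    rw [Finset.card_sdiff_add_card_eq_card hsub]
    simp
  have h2 : (blockNonEdges m n r G).card ≤ m * (Finset.univ.powersetCard r \ G).card := by
    refine le_trans Finset.card_biUnion_le ?_
    simp
  have h3 : ((Finset.univ : Finset (Fin (m * n))).powersetCard r).card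
      ≤ (blockGraph m n r G).card + (blockNonEdges m n r G).card := by
    have := Finset.le_card_sdiff (blockNonEdges m n r G)
      ((Finset.univ : Finset (Fin (m * n))).powersetCard r)
    unfold blockGraph
    omega
  rw [Finset.card_powersetCard, Finset.card_univ, Fintype.card_fin] at h3
  have h1' : ((Finset.univ.powersetCard r \ G).card : ℝ) + G.card = n.choose r := by
    exact_mod_cast h1
  have h2' : ((blockNonEdges m n r G).card : ℝ)
      ≤ m * ((Finset.univ.powersetCard r \ G).card : ℝ) := by exact_mod_cast h2
  have h3' : ((m * n).choose r : ℝ)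
      ≤ (blockGraph m n r G).card + (blockNonEdges m n r G).card := by exact_mod_cast h3
  rw [← h1', add_sub_cancel_right]
  linarith

/-- A subgraph of `blockGraph` inside `W` misses, in each block, all non-edges of `G` inside
the trace of `W`; these families are disjoint because `r ≥ 1`. -/
lemma card_sub_blockGraph_le {m n r : ℕ} (hr : 1 ≤ r) (G : Finset (Finset (Fin n)))
    (hG : ∀ e ∈ G, e.card = r) (W : Finset (Fin (m * n)))
    (H : Finset (Finset (Fin (m * n)))) (hH : H ⊆ blockGraph m n r G) (hHW : ∀ e ∈ H, e ⊆ W) :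
    (H.card : ℝ) + ∑ i : Fin m,
      (((Finset.univ.filter fun x => blockEmb m n i x ∈ W).card.choose r : ℝ)
        - (G.filter (· ⊆ Finset.univ.filter fun x => blockEmb m n i x ∈ W)).card)
      ≤ (W.card.choose r : ℝ) := by
  set T : Fin m → Finset (Fin n) := fun i => Finset.univ.filter fun x => blockEmb m n i x ∈ W
    with hT
  let B : Fin m → Finset (Finset (Fin (m * n))) := fun i =>
    ((T i).powersetCard r \ G).map (Finset.mapEmbedding (blockEmb m n i)).toEmbedding
  have hBcard : ∀ i, ((B i).card : ℝ)
      = ((T i).card.choose r : ℝ) - (G.filter (· ⊆ T i)).card := by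
    intro i
    have e1 : (T i).powersetCard r \ G = (T i).powersetCard r \ G.filter (· ⊆ T i) := by
      ext e
      simp only [Finset.mem_sdiff, Finset.mem_powersetCard, Finset.mem_filter]
      tauto
    have hsub : G.filter (· ⊆ T i) ⊆ (T i).powersetCard r := fun e he =>
      Finset.mem_powersetCard.mpr
        ⟨(Finset.mem_filter.mp he).2, hG e (Finset.mem_filter.mp he).1⟩
    have h2 := Finset.card_sdiff_add_card_eq_card hsub
    rw [Finset.card_powersetCard] at h2
    rw [Finset.card_map, e1, ← h2]
    push_cast
    ring
  have hdisj : (Set.univ : Set (Fin m)).PairwiseDisjoint B := by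
    intro i _ j _ hij
    refine Finset.disjoint_left.mpr fun f hf hf' => hij ?_
    obtain ⟨e, he, rfl⟩ := Finset.mem_map.mp hf
    obtain ⟨e', he', hee⟩ := Finset.mem_map.mp hf'
    have hc := (Finset.mem_powersetCard.mp (Finset.mem_sdiff.mp he).1).2
    obtain ⟨x, hx⟩ := Finset.card_pos.mp (show 0 < e.card by omega)
    have hx' : blockEmb m n i x ∈ e'.map (blockEmb m n j) := by
      have : e'.map (blockEmb m n j) = e.map (blockEmb m n i) := hee
      rw [this]
      exact Finset.mem_map_of_mem _ hx
    obtain ⟨y, _, hy⟩ := Finset.mem_map.mp hx'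
    have := finProdFinEquiv.injective (show finProdFinEquiv (j, y) = finProdFinEquiv (i, x) from hy)
    exact (Prod.ext_iff.mp this).1.symm
  have hunion : (Finset.univ.biUnion B).card = ∑ i, (B i).card :=
    Finset.card_biUnion fun i _ j _ hij => hdisj (Set.mem_univ i) (Set.mem_univ j) hij
  have hHB : Disjoint H (Finset.univ.biUnion B) := by
    refine Finset.disjoint_left.mpr fun f hf hf' => ?_
    refine (Finset.mem_sdiff.mp (hH hf)).2 ?_
    obtain ⟨i, _, hi⟩ := Finset.mem_biUnion.mp hf'
    refine Finset.mem_biUnion.mpr ⟨i, Finset.mem_univ _, ?_⟩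
    refine Finset.map_subset_map.mpr ?_ hi
    exact Finset.sdiff_subset_sdiff (Finset.powersetCard_mono (Finset.subset_univ _)) subset_rfl
  have hsub : H ∪ Finset.univ.biUnion B ⊆ W.powersetCard r := by
    refine Finset.union_subset ?_ ?_
    · intro f hf
      exact Finset.mem_powersetCard.mpr
        ⟨hHW f hf, (Finset.mem_powersetCard.mp (Finset.mem_sdiff.mp (hH hf)).1).2⟩
    · intro f hf
      obtain ⟨i, _, hi⟩ := Finset.mem_biUnion.mp hf
      obtain ⟨e, he, rfl⟩ := Finset.mem_map.mp hi
      obtain ⟨heT, hec⟩ := Finset.mem_powersetCard.mp (Finset.mem_sdiff.mp he).1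
      refine Finset.mem_powersetCard.mpr ⟨?_, ?_⟩
      · intro y hy
        obtain ⟨x, hx, rfl⟩ := Finset.mem_map.mp (show y ∈ e.map (blockEmb m n i) from hy)
        exact (Finset.mem_filter.mp (heT hx)).2
      · exact (Finset.card_map (blockEmb m n i)).trans hec
  have hcard := Finset.card_le_card hsub
  rw [Finset.card_union_of_disjoint hHB, hunion, Finset.card_powersetCard] at hcard
  have hcard' : (H.card : ℝ) + ∑ i, ((B i).card : ℝ) ≤ (W.card.choose r : ℝ) := by
    exact_mod_cast hcard
  simpa only [hBcard] using hcard'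

/-! ### Transfer of jumps -/

/-- No `r`-graph has density above `1`, so the number `1` is vacuously a jump. -/
lemma isJump_one (r : ℕ) : IsJump r 1 := by
  refine ⟨1, one_pos, fun ε hε k _ => ⟨0, fun n _ G hG hd => ?_⟩⟩
  exfalso
  have hsub : G ⊆ Finset.univ.powersetCard r := fun e he =>
    Finset.mem_powersetCard.mpr ⟨Finset.subset_univ _, hG e he⟩
  have h1 : G.card ≤ n.choose r := by
    simpa using Finset.card_le_card hsub
  have h2 : (G.card : ℝ) / (n.choose r : ℝ) ≤ 1 :=
    div_le_one_of_le₀ (by exact_mod_cast h1) (Nat.cast_nonneg _)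
  linarith

/-- if `α` is a non-jump for `r`, then so is `1 − (1 − α)/m^{r−1}` for each
integer `m ≥ 2`. -/
theorem nonjump_shift (r : ℕ) (hr : 2 ≤ r) (α : ℝ) (hα : α ∈ Set.Icc (0:ℝ) 1)
    (h : ¬ IsJump r α) (m : ℕ) (hm : 2 ≤ m) :
    ¬ IsJump r (1 - (1 - α) / (m : ℝ) ^ (r - 1)) := by
  intro hβ
  refine h ?_
  obtain ⟨hα0, hα1⟩ := hα
  rcases hα1.eq_or_lt with rfl | hα1
  · exact isJump_one r
  obtain ⟨c, hc, hjump⟩ := hβ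
  have hm1 : (1 : ℝ) ≤ m := by exact_mod_cast (show 1 ≤ m by omega)
  set q : ℝ := (m : ℝ) ^ (r - 1) with hq
  have hq1 : 1 ≤ q := one_le_pow₀ hm1
  have hq0 : 0 < q := by linarith
  have hmq : (m : ℝ) ^ r = m * q := by
    rw [hq, ← pow_succ']
    congr 1
    omega
  set c' : ℝ := min (c / 2) (1 - α) with hc'
  have hc'0 : 0 < c' := lt_min (by linarith) (by linarith)
  have hc'c : c' ≤ c / 2 := min_le_left _ _
  have hc'α : c' ≤ 1 - α := min_le_right _ _
  refine ⟨c', hc'0, fun ε hε k hk => ?_⟩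
  set δ : ℝ := min (c / 4) (1 / q) with hδ
  have hδ0 : 0 < δ := lt_min (by linarith) (by positivity)
  have hδc : δ ≤ c / 4 := min_le_left _ _
  obtain ⟨M, hkM, hM⟩ := exists_large_split m r k (by omega) (by omega)
    (m * (k.choose r : ℝ)) δ (by positivity) hδ0 (min_le_right _ _)
  obtain ⟨n₀, hn₀⟩ := hjump (ε / q) (by positivity) M (hk.trans hkM)
  refine ⟨n₀, fun n hn G hG hd => ?_⟩
  have hn_pos : (0 : ℝ) < (n.choose r : ℝ) := by
    -- Otherwise the density of `G` is the junk value `0`.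
    by_contra hcon
    have h0 : (n.choose r : ℝ) = 0 := le_antisymm (not_lt.mp hcon) (Nat.cast_nonneg _)
    rw [h0, div_zero] at hd
    linarith
  have hratio : (m : ℝ) * q * (n.choose r : ℝ) ≤ ((m * n).choose r : ℝ) := by
    rw [← hmq]
    exact_mod_cast pow_mul_choose_le m n r (by omega)
  have hN_pos : (0 : ℝ) < ((m * n).choose r : ℝ) := lt_of_lt_of_le (by positivity) hratio
  have hGle : (G.card : ℝ) ≤ n.choose r := by
    have hsub : G ⊆ Finset.univ.powersetCard r := fun e he =>
      Finset.mem_powersetCard.mpr ⟨Finset.subset_univ _, hG e he⟩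
    have h1 : G.card ≤ n.choose r := by
      simpa using Finset.card_le_card hsub
    exact_mod_cast h1
  have hε1 : α + ε ≤ 1 := hd.trans (div_le_one_of_le₀ hGle hn_pos.le)
  have hdens : 1 - (1 - α) / q + ε / q
      ≤ ((blockGraph m n r G).card : ℝ) / ((m * n).choose r : ℝ) := by
    rw [le_div_iff₀ hN_pos]
    refine le_trans ?_ (card_blockGraph_ge m n r G hG)
    rw [le_div_iff₀ hn_pos] at hd
    have h1 : (m : ℝ) * ((n.choose r : ℝ) - G.card) ≤ m * ((1 - α - ε) * n.choose r) := by
      gcongr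
      linarith
    have h2 : (m : ℝ) * ((1 - α - ε) * n.choose r) ≤ (1 - α - ε) / q * ((m * n).choose r : ℝ) := by
      have h3 : (0 : ℝ) ≤ (1 - α - ε) / q := div_nonneg (by linarith) hq0.le
      calc _ = (1 - α - ε) / q * (m * q * n.choose r) := by field_simp
        _ ≤ _ := mul_le_mul_of_nonneg_left hratio h3
    have h4 : (1 - (1 - α) / q + ε / q) * ((m * n).choose r : ℝ)
        = ((m * n).choose r : ℝ) - (1 - α - ε) / q * ((m * n).choose r : ℝ) := by ring
    rw [h4]
    linarith
  obtain ⟨W, hW, H, hHG, hHW, hHd⟩ := hn₀ (m * n)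
    (hn.trans (Nat.le_mul_of_pos_left n (by omega))) (blockGraph m n r G)
    (fun e he => (Finset.mem_powersetCard.mp (Finset.mem_sdiff.mp he).1).2) hdens
  have hkpos : (0 : ℝ) < (k.choose r : ℝ) := by exact_mod_cast Nat.choose_pos hk
  have hMpos : (0 : ℝ) < (M.choose r : ℝ) := by exact_mod_cast Nat.choose_pos (hk.trans hkM)
  by_contra hcon
  have hloc : ∀ S : Finset (Fin n), S.card = k →
      ((G.filter (· ⊆ S)).card : ℝ) ≤ (α + c') * (k.choose r : ℝ) := by
    intro S hS
    by_contra hlt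
    exact hcon ⟨S, hS, G.filter (· ⊆ S), Finset.filter_subset _ _,
      fun e he => (Finset.mem_filter.mp he).2, (le_div_iff₀ hkpos).mpr (not_le.mp hlt).le⟩
  have hcount := card_sub_blockGraph_le (by omega) G hG W H hHG hHW
  have hsplit := hM (fun i => (Finset.univ.filter fun x => blockEmb m n i x ∈ W).card)
    ((sum_card_block W).trans hW)
  rw [hW] at hcount
  -- Blocks with fewer than `k` points of `W` contribute at most `C(k, r)` each.
  have hmiss : (1 - α - c') * (∑ i : Fin m,
        ((Finset.univ.filter fun x => blockEmb m n i x ∈ W).card.choose r : ℝ)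
        - m * (k.choose r : ℝ))
      ≤ ∑ i : Fin m,
      (((Finset.univ.filter fun x => blockEmb m n i x ∈ W).card.choose r : ℝ)
        - (G.filter (· ⊆ Finset.univ.filter fun x => blockEmb m n i x ∈ W)).card) := by
    have e1 : (m : ℝ) * (k.choose r : ℝ) = ∑ _i : Fin m, (k.choose r : ℝ) := by simp
    rw [e1, ← Finset.sum_sub_distrib, Finset.mul_sum]
    refine Finset.sum_le_sum fun i _ => ?_
    set S := Finset.univ.filter fun x => blockEmb m n i x ∈ W
    rcases le_total k S.card with hkS | hkS
    · have := card_edges_le_of_local hG hk hloc S hkS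
      have h0 : 0 ≤ (1 - α - c') * (k.choose r : ℝ) := mul_nonneg (by linarith) hkpos.le
      linarith
    · have h1 : (S.card.choose r : ℝ) ≤ (k.choose r : ℝ) := by
        exact_mod_cast Nat.choose_le_choose r hkS
      have h2 : (1 - α - c') * ((S.card.choose r : ℝ) - (k.choose r : ℝ)) ≤ 0 :=
        mul_nonpos_of_nonneg_of_nonpos (by linarith) (by linarith)
      have h3 : ((G.filter (· ⊆ S)).card : ℝ) ≤ (S.card.choose r : ℝ) := by
        have hsub : G.filter (· ⊆ S) ⊆ S.powersetCard r := fun e he =>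
          Finset.mem_powersetCard.mpr
            ⟨(Finset.mem_filter.mp he).2, hG e (Finset.mem_filter.mp he).1⟩
        have := Finset.card_le_card hsub
        rw [Finset.card_powersetCard] at this
        exact_mod_cast this
      linarith
  have hγ := mul_le_mul_of_nonneg_left hsplit (show 0 ≤ 1 - α - c' by linarith)
  rw [le_div_iff₀ hMpos] at hHd
  have hfinal : (1 - (1 - α) / q + c) * (M.choose r : ℝ)
      + (1 - α - c') * ((1 / q - δ) * (M.choose r : ℝ)) ≤ 1 * (M.choose r : ℝ) := by
    linarith
  have hfinal' : (1 - (1 - α) / q + c) + (1 - α - c') * (1 / q - δ) ≤ 1 := by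
    refine le_of_mul_le_mul_right ?_ hMpos
    linarith
  have hexp : (1 - (1 - α) / q + c) + (1 - α - c') * (1 / q - δ)
      = 1 + c - c' / q - (1 - α - c') * δ := by ring
  have h5 : c' / q ≤ c / 2 := (div_le_self hc'0.le hq1).trans hc'c
  have h6 : (1 - α - c') * δ ≤ c / 4 :=
    (mul_le_of_le_one_left hδ0.le (by linarith)).trans hδc
  linarith
end

section
/- Let r ≥ 2 be an integer. If α ∈ [0,1) is a non-jump for r, then for every constant c > 0 there exists a Turán density γ ∈ Π_∞^{(r)} with α < γ ≤ α + c. -/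
/-!
Fix `c > 0`. Since `α` is a non-jump, `c` does not witness a jump: there are `ε > 0` and `m ≥ r`
such that, for arbitrarily large `n`, some `r`-graph on `n` vertices has density at least `α + ε`
while all its subgraphs on `m` vertices have density below `α + c`. Let `𝓕` be the family of all
`r`-graphs on `m` vertices with density at least `α + c` (`denseFamily`). The graphs above are
`𝓕`-free (`not_contains_of_sparse`), so `ex(n, 𝓕) / C(n, r) ≥ α + ε` for arbitrarily large `n`.
By the averaging argument of Katona, Nemetz and Simonovits (`exNum_succ_le`) the sequence
`ex(n, 𝓕) / C(n, r)` is non-increasing for `n ≥ r`; hence it converges, its limit is at least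
`α + ε > α`, and the limit is at most the term at `n = m`, which is at most `α + c`.
-/

open Filter Topology

/-- The `r`-graphs on `m` vertices with density at least `d`. -/
def denseFamily (r m : ℕ) (d : ℝ) : Set (Σ k : ℕ, Finset (Finset (Fin k))) :=
  {F | F.1 = m ∧ (∀ e ∈ F.2, e.card = r) ∧ d ≤ (F.2.card : ℝ) / (m.choose r : ℝ)}

theorem card_le_choose {r n : ℕ} {G : Finset (Finset (Fin n))} (hG : ∀ e ∈ G, e.card = r) :
    G.card ≤ n.choose r := by
  have h : G ⊆ Finset.powersetCard r Finset.univ := fun e he =>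
    Finset.mem_powersetCard.2 ⟨Finset.subset_univ _, hG e he⟩
  simpa using Finset.card_le_card h

theorem card_le_exNum {r n : ℕ} {𝓕 : Set (Σ k : ℕ, Finset (Finset (Fin k)))}
    {G : Finset (Finset (Fin n))} (hG : ∀ e ∈ G, e.card = r)
    (hfree : ∀ F ∈ 𝓕, ¬ GraphContains G F.2) : G.card ≤ exNum r n 𝓕 := by
  refine le_csSup ⟨n.choose r, ?_⟩ ⟨G, hG, hfree, rfl⟩
  rintro _ ⟨K, hK, -, rfl⟩
  exact card_le_choose hK

/-- A uniform upper bound on the sizes of `𝓕`-free graphs bounds `exNum`; if there are no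
`𝓕`-free graphs at all, then `exNum` is `sSup ∅ = 0`. -/
theorem exNum_le {r n b : ℕ} {𝓕 : Set (Σ k : ℕ, Finset (Finset (Fin k)))}
    (hb : ∀ G : Finset (Finset (Fin n)), (∀ e ∈ G, e.card = r) →
      (∀ F ∈ 𝓕, ¬ GraphContains G F.2) → G.card ≤ b) : exNum r n 𝓕 ≤ b := by
  refine csSup_le' ?_
  rintro _ ⟨G, hG, hfree, rfl⟩
  exact hb G hG hfree

/-- The graph on `n` vertices obtained from `G` by deleting the vertex `v`. -/
def deleteVertex {n : ℕ} (G : Finset (Finset (Fin (n + 1)))) (v : Fin (n + 1)) :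
    Finset (Finset (Fin n)) :=
  Finset.univ.filter fun e => e.map v.succAboveEmb ∈ G

theorem card_deleteVertex {n : ℕ} (G : Finset (Finset (Fin (n + 1)))) (v : Fin (n + 1)) :
    (deleteVertex G v).card = (G.filter fun e => v ∉ e).card := by
  refine Finset.card_bij (fun e _ => e.map v.succAboveEmb) ?_ ?_ ?_
  · intro e he
    simp only [deleteVertex, Finset.mem_filter, Finset.mem_univ, true_and] at he
    simp [he, Fin.succAbove_ne]
  · intro a _ b _ hab
    exact Finset.map_injective _ hab
  · intro e he
    rw [Finset.mem_filter] at he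
    have hmap : (Finset.univ.filter fun i => v.succAbove i ∈ e).map v.succAboveEmb = e := by
      ext w
      simp only [Finset.mem_map, Finset.mem_filter, Finset.mem_univ, true_and,
        Fin.coe_succAboveEmb]
      constructor
      · rintro ⟨i, hi, rfl⟩
        exact hi
      · intro hw
        obtain ⟨i, rfl⟩ := Fin.exists_succAbove_eq (x := w) (y := v)
          (fun h => he.2 (h ▸ hw))
        exact ⟨i, hw, rfl⟩
    refine ⟨_, ?_, hmap⟩
    simpa [deleteVertex, hmap] using he.1

/-- Averaging over the deleted vertex: every edge survives exactly `n + 1 - r` of the `n + 1`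
vertex deletions, and each vertex-deleted graph is again `𝓕`-free. -/
theorem exNum_succ_le {r n : ℕ} {𝓕 : Set (Σ k : ℕ, Finset (Finset (Fin k)))}
    {G : Finset (Finset (Fin (n + 1)))} (hG : ∀ e ∈ G, e.card = r)
    (hfree : ∀ F ∈ 𝓕, ¬ GraphContains G F.2) :
    G.card * (n + 1 - r) ≤ (n + 1) * exNum r n 𝓕 := by
  have hsum : ∑ v, (deleteVertex G v).card = G.card * (n + 1 - r) := by
    simp_rw [card_deleteVertex, Finset.card_filter]
    rw [Finset.sum_comm]
    refine Finset.sum_const_nat fun e he => ?_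
    rw [← Finset.card_filter, ← hG e he, show n + 1 - e.card = eᶜ.card by
      rw [Finset.card_compl, Fintype.card_fin]]
    congr 1
    ext v
    simp
  have hle : ∀ v ∈ (Finset.univ : Finset (Fin (n + 1))),
      (deleteVertex G v).card ≤ exNum r n 𝓕 := by
    intro v _
    refine card_le_exNum ?_ ?_
    · intro e he
      simp only [deleteVertex, Finset.mem_filter, Finset.mem_univ, true_and] at he
      simpa using hG _ he
    · rintro F hF ⟨φ, hφ, hφF⟩
      refine hfree F hF ⟨fun i => v.succAbove (φ i),
        Fin.succAbove_right_injective.comp hφ, fun e he => ?_⟩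
      have := hφF e he
      simp only [deleteVertex, Finset.mem_filter, Finset.mem_univ, true_and] at this
      rwa [Finset.map_eq_image, Finset.image_image] at this
  have := Finset.sum_le_card_nsmul _ _ _ hle
  rw [hsum] at this
  simpa using this

theorem exNum_div_choose_succ_le {r n : ℕ} (hn : r ≤ n)
    (𝓕 : Set (Σ k : ℕ, Finset (Finset (Fin k)))) :
    (exNum r (n + 1) 𝓕 : ℝ) / ((n + 1).choose r : ℝ) ≤
      (exNum r n 𝓕 : ℝ) / (n.choose r : ℝ) := by
  have hpos : 0 < n + 1 - r := by omega
  have hmul : exNum r (n + 1) 𝓕 * (n + 1 - r) ≤ (n + 1) * exNum r n 𝓕 := by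
    rw [← Nat.le_div_iff_mul_le hpos]
    exact exNum_le fun G hG hfree =>
      (Nat.le_div_iff_mul_le hpos).2 (exNum_succ_le hG hfree)
  have hc := Nat.choose_mul_succ_eq n r
  have h1 : 0 < n.choose r := Nat.choose_pos hn
  have h2 : 0 < (n + 1).choose r := Nat.choose_pos (by omega)
  rw [div_le_div_iff₀ (by exact_mod_cast h2) (by exact_mod_cast h1)]
  have : exNum r (n + 1) 𝓕 * n.choose r ≤ exNum r n 𝓕 * (n + 1).choose r := by
    refine Nat.le_of_mul_le_mul_right ?_ (Nat.succ_pos n)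
    calc exNum r (n + 1) 𝓕 * n.choose r * (n + 1)
        = exNum r (n + 1) 𝓕 * (n + 1 - r) * (n + 1).choose r := by
          rw [mul_assoc, hc]; ring
      _ ≤ (n + 1) * exNum r n 𝓕 * (n + 1).choose r := Nat.mul_le_mul_right _ hmul
      _ = exNum r n 𝓕 * (n + 1).choose r * (n + 1) := by ring
  exact_mod_cast this

/-- If every subgraph of `G` on `m` vertices has density below `d`, then `G` contains no member
of `denseFamily r m d`. -/
theorem not_contains_of_sparse {r m n : ℕ} {d : ℝ} {G : Finset (Finset (Fin n))}
    (hG : ∀ W : Finset (Fin n), W.card = m → ∀ H ⊆ G, (∀ e ∈ H, e ⊆ W) →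
      (H.card : ℝ) / (m.choose r : ℝ) < d) :
    ∀ F ∈ denseFamily r m d, ¬ GraphContains G F.2 := by
  rintro ⟨k, F⟩ ⟨rfl, -, hd⟩ ⟨φ, hφ, hφF⟩
  refine absurd hd (not_le.2 ?_)
  have hlt := hG (Finset.univ.image φ) (by simp [Finset.card_image_of_injective _ hφ])
    (F.image fun e => e.image φ) (Finset.image_subset_iff.2 hφF) (by
      intro e he
      obtain ⟨f, -, rfl⟩ := Finset.mem_image.1 he
      exact Finset.image_subset_image (Finset.subset_univ f))
  rwa [Finset.card_image_of_injective _ (Finset.image_injective hφ)] at hlt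

theorem exNum_denseFamily_le {r m : ℕ} {d : ℝ} (hm : r ≤ m) (hd : 0 ≤ d) :
    (exNum r m (denseFamily r m d) : ℝ) / (m.choose r : ℝ) ≤ d := by
  have hpos : (0 : ℝ) < (m.choose r : ℝ) := by exact_mod_cast Nat.choose_pos hm
  have hle : exNum r m (denseFamily r m d) ≤ ⌊d * (m.choose r : ℝ)⌋₊ := by
    refine exNum_le fun G hG hfree => Nat.le_floor ?_
    by_contra! hlt
    -- A graph on `m` vertices that is too dense is itself a member of the family.
    exact hfree ⟨m, G⟩ ⟨rfl, hG, (le_div_iff₀ hpos).2 hlt.le⟩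
      ⟨id, Function.injective_id, fun e he => by simpa using he⟩
  rw [div_le_iff₀ hpos]
  exact (Nat.cast_le.2 hle).trans (Nat.floor_le (by positivity))

/-- if `α ∈ [0,1)` is a non-jump for `r`, then for every `c > 0` there is a
Turán density `γ ∈ Π_∞^{(r)}` with `α < γ ≤ α + c`. -/
theorem turanDensity_near_nonjump (r : ℕ) (hr : 2 ≤ r) (α : ℝ) (hα : α ∈ Set.Ico (0:ℝ) 1)
    (h : ¬ IsJump r α) :
    ∀ c : ℝ, 0 < c → ∃ γ ∈ turanDensitySet r, α < γ ∧ γ ≤ α + c := by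
  intro c hc
  unfold IsJump at h
  push Not at h
  obtain ⟨ε, hε, m, hm, hn⟩ := h c hc
  set 𝓕 := denseFamily r m (α + c) with h𝓕
  set f : ℕ → ℝ := fun n => (exNum r n 𝓕 : ℝ) / (n.choose r : ℝ) with hf
  have hanti : Antitone fun n => f (n + r) := antitone_nat_of_succ_le fun n => by
    have := exNum_div_choose_succ_le (r := r) (n := n + r) (by omega) 𝓕
    simpa only [hf, Nat.add_right_comm n 1 r] using this
  have hbdd : BddBelow (Set.range fun n => f (n + r)) := by
    refine ⟨0, ?_⟩
    rintro _ ⟨n, rfl⟩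
    simp only [hf]
    positivity
  have hlim := (tendsto_add_atTop_iff_nat (f := f) r).1 (tendsto_atTop_ciInf hanti hbdd)
  refine ⟨⨅ n, f (n + r), ⟨𝓕, fun F hF => hF.2.1, hlim⟩, ?_, ?_⟩
  · refine lt_of_lt_of_le (lt_add_of_pos_right α hε) (le_ciInf fun k => ?_)
    obtain ⟨n, hkn, G, hG, hdens, hsparse⟩ := hn (k + r)
    have hfn : α + ε ≤ f n := by
      refine hdens.trans ?_
      simp only [hf]
      gcongr
      exact card_le_exNum hG (not_contains_of_sparse hsparse)
    have := hanti (show k ≤ n - r by omega)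
    simp only [Nat.sub_add_cancel (show r ≤ n by omega)] at this
    exact hfn.trans this
  · have h1 := ciInf_le hbdd (m - r)
    simp only [Nat.sub_add_cancel hm] at h1
    exact h1.trans (exNum_denseFamily_le hm (by linarith [hα.1]))
end
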